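/- For every n ≥ 0 and all x₁, x₂, y₁, y₂ ∈ (−1,1) with x₁ ≠ x₂ and y₁ ≠ y₂, the reproducing kernel of Π_n² in L²(W̃_{1/2}) satisfies K_n(W̃_{1/2}; (x₁+x₂, x₁x₂), (y₁+y₂, y₁y₂)) = (1/2) [ k_{n+1}(w; x₁, y₁) k_{n+1}(w; x₂, y₂) − k_{n+1}(w; x₂, y₁) k_{n+1}(w; x₁, y₂) ] / ((x₁ − x₂)(y₁ − y₂)). -/

import Mathlib

open MeasureTheory Real Set Filter
open scoped ENNReal

noncomputable section

/-- The parabolic-type domain `Ω`, the image of the triangle `-1 < x < y < 1`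
under `(x, y) ↦ (x + y, x y)`. -/
def omegaDom : Set (ℝ × ℝ) :=
  {q | ∃ x y : ℝ, -1 < x ∧ x < y ∧ y < 1 ∧ q = (x + y, x * y)}

/-- The square `[-1,1]²`. -/
def sqDom : Set (ℝ × ℝ) := Icc (-1 : ℝ) 1 ×ˢ Icc (-1 : ℝ) 1

/-- The open triangle `-1 < x < y < 1`. -/
def triDom : Set (ℝ × ℝ) := {q | -1 < q.1 ∧ q.1 < q.2 ∧ q.2 < 1}

/-- The smaller root `x(u,v)` of `t² - u t + v = 0`. -/
def xRoot (q : ℝ × ℝ) : ℝ := (q.1 - Real.sqrt (q.1 ^ 2 - 4 * q.2)) / 2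

/-- The larger root `y(u,v)` of `t² - u t + v = 0`. -/
def yRoot (q : ℝ × ℝ) : ℝ := (q.1 + Real.sqrt (q.1 ^ 2 - 4 * q.2)) / 2

/-- Evaluation of a two-variable polynomial at a point of `ℝ²`. -/
def evalP (P : MvPolynomial (Fin 2) ℝ) (q : ℝ × ℝ) : ℝ :=
  MvPolynomial.eval ![q.1, q.2] P

/-- The space `V_n(W)` of orthogonal polynomials of degree `n` for the weight `W`
on the domain `D`: polynomials of exact total degree `n` orthogonal to all
polynomials of lower degree. -/
def Vpoly (D : Set (ℝ × ℝ)) (W : ℝ × ℝ → ℝ) (n : ℕ) : Set (MvPolynomial (Fin 2) ℝ) :=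
  {P | P.totalDegree = n ∧ ∀ Q : MvPolynomial (Fin 2) ℝ, Q.totalDegree < n →
    (∫ q in D, evalP P q * evalP Q q * W q) = 0}

/-- `Q 0, …, Q n` is an orthonormal basis of `V_n(W)` on `D`. -/
def isONBVn (D : Set (ℝ × ℝ)) (W : ℝ × ℝ → ℝ) (n : ℕ)
    (Q : ℕ → MvPolynomial (Fin 2) ℝ) : Prop :=
  (∀ k, k ≤ n → Q k ∈ Vpoly D W n) ∧
  (∀ k, k ≤ n → ∀ j, j ≤ n →
    (∫ q in D, evalP (Q k) q * evalP (Q j) q * W q) = if k = j then 1 else 0) ∧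
  (∀ R ∈ Vpoly D W n, R ∈ Submodule.span ℝ (Q '' Set.Iic n))

/-- `K` is the reproducing kernel of `Π_n²` in `L²(W)` on the domain `D`:
it is a polynomial function, for each fixed `x ∈ D` it is a polynomial of total
degree `≤ n` in the second variable, and it reproduces every polynomial of total
degree `≤ n`. -/
def IsRK (D : Set (ℝ × ℝ)) (W : ℝ × ℝ → ℝ) (n : ℕ) (K : ℝ × ℝ → ℝ × ℝ → ℝ) : Prop :=
  (∃ KP : MvPolynomial (Fin 4) ℝ,
    ∀ x y : ℝ × ℝ, K x y = MvPolynomial.eval ![x.1, x.2, y.1, y.2] KP) ∧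
  (∀ x ∈ D, ∃ P : MvPolynomial (Fin 2) ℝ, P.totalDegree ≤ n ∧ ∀ y, K x y = evalP P y) ∧
  (∀ P : MvPolynomial (Fin 2) ℝ, P.totalDegree ≤ n →
    ∀ x ∈ D, (∫ y in D, K x y * evalP P y * W y) = evalP P x)

/-- `p` is the sequence of orthonormal polynomials with respect to the weight `w`
on `[-1,1]`: `p n` has degree exactly `n`, positive leading coefficient, and the
`p n` are orthonormal in `L²(w)`. -/
def IsONPS (w : ℝ → ℝ) (p : ℕ → Polynomial ℝ) : Prop :=
  (∀ n, (p n).natDegree = n) ∧ (∀ n, 0 < (p n).leadingCoeff) ∧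
  (∀ n m, (∫ x in Icc (-1:ℝ) 1, (p n).eval x * (p m).eval x * w x)
    = if n = m then 1 else 0)

/-- The Christoffel–Darboux kernel `k_n(x,y) = ∑_{j=0}^n p_j(x) p_j(y)`. -/
def CDK (p : ℕ → Polynomial ℝ) (n : ℕ) (x y : ℝ) : ℝ :=
  ∑ j ∈ Finset.range (n + 1), (p j).eval x * (p j).eval y

/-- The Jacobi factor `J_{a,b}(x) = (1-x)^a (1+x)^b`. -/
def Jw (a b : ℝ) (x : ℝ) : ℝ := (1 - x) ^ a * (1 + x) ^ b

/-- The factor `J*_{a,b}(u,v) = (1-u+v)^a (1+u+v)^b` on `Ω`. -/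
def JstarW (a b : ℝ) (q : ℝ × ℝ) : ℝ := (1 - q.1 + q.2) ^ a * (1 + q.1 + q.2) ^ b

/-- Modulus of continuity of `ψ` on `[-1,1]`. -/
def modCont (ψ : ℝ → ℝ) (t : ℝ) : ℝ :=
  sSup {d : ℝ | ∃ x ∈ Icc (-1:ℝ) 1, ∃ y ∈ Icc (-1:ℝ) 1, |x - y| ≤ t ∧ d = |ψ x - ψ y|}

/-- The generalized Jacobi class `GJ`. -/
def IsGJ (w : ℝ → ℝ) : Prop :=
  ∃ (r : ℕ) (ψ : ℝ → ℝ) (γ₀ γ₁ : ℝ) (γs xs : Fin r → ℝ),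
    -1 < γ₀ ∧ -1 < γ₁ ∧ (∀ i, -1 < γs i) ∧
    StrictMono xs ∧ (∀ i, xs i ∈ Ioo (-1:ℝ) 1) ∧
    ContinuousOn ψ (Icc (-1:ℝ) 1) ∧ (∀ x ∈ Icc (-1:ℝ) 1, 0 < ψ x) ∧
    IntegrableOn (fun t => modCont ψ t / t) (Ioc (0:ℝ) 1) ∧
    (∀ x : ℝ, |x| ≤ 1 → w x = ψ x * (1 - x) ^ γ₀ * (1 + x) ^ γ₁ * ∏ i, |x - xs i| ^ γs i) ∧
    (∀ x : ℝ, 1 < |x| → w x = 0)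

/-- The `L^p`-norm `‖f‖_{w,e}` on `[-1,1]` (as an extended nonnegative real). -/
def lpnormI (w : ℝ → ℝ) (e : ℝ) (f : ℝ → ℝ) : ℝ≥0∞ :=
  (∫⁻ x in Icc (-1:ℝ) 1, ENNReal.ofReal (|f x| ^ e * w x)) ^ (1 / e)

/-- The `L^p`-norm `‖f‖_{W,e}` on a planar domain `D` (as an extended nonnegative real). -/
def lpnormD (D : Set (ℝ × ℝ)) (W : ℝ × ℝ → ℝ) (e : ℝ) (f : ℝ × ℝ → ℝ) : ℝ≥0∞ :=
  (∫⁻ q in D, ENNReal.ofReal (|f q| ^ e * W q)) ^ (1 / e)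

/-- The operator `s_n^{i,j}(w; f, x)` built from the Christoffel–Darboux kernel of the
orthonormal polynomials `pij` of the weight `J_{i,j} w`. -/
def snOp (w : ℝ → ℝ) (pij : ℕ → Polynomial ℝ) (i j : ℝ) (n : ℕ) (f : ℝ → ℝ) (x : ℝ) : ℝ :=
  Jw (i/2) (j/2) x * ∫ y in Icc (-1:ℝ) 1, f y * CDK pij n x y * Jw (i/2) (j/2) y * w y

/-- Substitution `(x, y) ↦ (2 x y, x² + y² - 1)` on two-variable polynomials. -/
def quadSub (P : MvPolynomial (Fin 2) ℝ) : MvPolynomial (Fin 2) ℝ :=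
  MvPolynomial.aeval
    ![2 * MvPolynomial.X 0 * MvPolynomial.X 1,
      MvPolynomial.X 0 ^ 2 + MvPolynomial.X 1 ^ 2 - 1] P

/-- A one-variable polynomial viewed as a polynomial in the first variable. -/
def polyX (q : Polynomial ℝ) : MvPolynomial (Fin 2) ℝ :=
  Polynomial.aeval (MvPolynomial.X 0) q

/-- A one-variable polynomial viewed as a polynomial in the second variable. -/
def polyY (q : Polynomial ℝ) : MvPolynomial (Fin 2) ℝ :=
  Polynomial.aeval (MvPolynomial.X 1) q

/-!
Pulling back along `(s, t) ↦ (s + t, s t)` and multiplying by `s - t` turns `Π_n²` into the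
antisymmetric polynomials of degree at most `n + 1` in each variable, and the inner product of
`L²(W̃_{1/2})` into that of `L²(w ⊗ w)`: the Jacobian of the substitution is `|s - t|` and
`W̃_{1/2}` contributes `2 w(s) w(t) |s - t|` on the triangle `s < t`, which is half of the square.
The product `k_{n+1} ⊗ k_{n+1}` reproduces all polynomials of degree at most `n + 1` in each
variable, so its antisymmetrization reproduces twice the antisymmetric ones. The kernel `K_n` is
therefore determined on `Ω`, and, both sides being polynomial, everywhere.
-/

section AntisymmetricPolynomials

open MvPolynomial

variable {R : Type*} [CommRing R]

/-- The linear map `P ↦ (s - t) P(s + t, s t)`, which represents a polynomial in the elementary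
symmetric functions of `s` and `t` by an antisymmetric function on `R × R`. -/
def vandermondeLift : MvPolynomial (Fin 2) R →ₗ[R] (R × R → R) where
  toFun P z := (z.1 - z.2) * eval ![z.1 + z.2, z.1 * z.2] P
  map_add' P Q := by ext z; simp [mul_add]
  map_smul' c P := by ext z; simp [mul_left_comm]

lemma vandermondeLift_apply (P : MvPolynomial (Fin 2) R) (z : R × R) :
    vandermondeLift P z = (z.1 - z.2) * eval ![z.1 + z.2, z.1 * z.2] P :=
  rfl

lemma vandermondeLift_swap (P : MvPolynomial (Fin 2) R) (z : R × R) :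
    vandermondeLift P z.swap = -vandermondeLift P z := by
  simp only [vandermondeLift_apply, Prod.fst_swap, Prod.snd_swap, add_comm z.2, mul_comm z.2]
  ring

variable (R) in
/-- The functions `(s - t) P(s + t, s t)` with `P` of total degree at most `n`; over `ℝ`
these are the antisymmetric polynomial functions of degree at most `n + 1` in each variable. -/
def antisymmPoly (n : ℕ) : Submodule R (R × R → R) :=
  (restrictTotalDegree (Fin 2) R n).map vandermondeLift

lemma mem_antisymmPoly {n : ℕ} {F : R × R → R} :
    F ∈ antisymmPoly R n ↔ ∃ P, P.totalDegree ≤ n ∧ vandermondeLift P = F := by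
  simp only [antisymmPoly, Submodule.mem_map, mem_restrictTotalDegree]

lemma antisymmPoly_mono : Monotone (antisymmPoly R) := fun m n hmn F hF ↦ by
  obtain ⟨P, hP, rfl⟩ := mem_antisymmPoly.1 hF
  exact mem_antisymmPoly.2 ⟨P, hP.trans hmn, rfl⟩

lemma eval_mul_mem_antisymmPoly {m n : ℕ} {Q : MvPolynomial (Fin 2) R} (hQ : Q.totalDegree ≤ m)
    {F : R × R → R} (hF : F ∈ antisymmPoly R n) :
    (fun z ↦ eval ![z.1 + z.2, z.1 * z.2] Q * F z) ∈ antisymmPoly R (m + n) := by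
  obtain ⟨P, hP, rfl⟩ := mem_antisymmPoly.1 hF
  refine mem_antisymmPoly.2 ⟨Q * P, (totalDegree_mul Q P).trans (add_le_add hQ hP), ?_⟩
  ext z
  simp only [vandermondeLift_apply, map_mul, mul_left_comm]

lemma totalDegree_X_pow_le {σ S : Type*} [CommSemiring S] (i : σ) (k : ℕ) :
    (X i ^ k : MvPolynomial σ S).totalDegree ≤ k := by
  simpa only [X_pow_eq_monomial] using (totalDegree_monomial_le _ _).trans (by simp)

lemma pow_sub_pow_mem_antisymmPoly (m : ℕ) :
    (fun z : R × R ↦ z.1 ^ (m + 1) - z.2 ^ (m + 1)) ∈ antisymmPoly R m := by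
  have totalDegree_X_le (i : Fin 2) : (X i : MvPolynomial (Fin 2) R).totalDegree ≤ 1 := by
    simpa only [pow_one] using totalDegree_X_pow_le (S := R) i 1
  induction m using Nat.twoStepInduction with
  | zero => exact mem_antisymmPoly.2 ⟨1, by simp, by ext z; simp [vandermondeLift_apply]⟩
  | one =>
    refine mem_antisymmPoly.2 ⟨X 0, totalDegree_X_le 0, ?_⟩
    ext z
    simp only [vandermondeLift_apply, eval_X, Matrix.cons_val_zero]
    ring
  | more m ih₀ ih₁ =>
    have h₁ := eval_mul_mem_antisymmPoly (totalDegree_X_le 0) ih₁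
    have h₀ := eval_mul_mem_antisymmPoly (totalDegree_X_le 1) ih₀
    convert sub_mem (antisymmPoly_mono (by lia : 1 + (m + 1) ≤ m + 2) h₁)
      (antisymmPoly_mono (by lia : 1 + m ≤ m + 2) h₀) using 1
    ext z
    simp only [eval_X, Matrix.cons_val_zero, Matrix.cons_val_one, Pi.sub_apply]
    ring

lemma monomial_sub_swap_mem_antisymmPoly {n j k : ℕ} (hj : j ≤ n + 1) (hk : k ≤ n + 1) :
    (fun z : R × R ↦ z.1 ^ j * z.2 ^ k - z.1 ^ k * z.2 ^ j) ∈ antisymmPoly R n := by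
  wlog hkj : k ≤ j generalizing j k
  · convert neg_mem (this hk hj (by lia)) using 1
    ext z
    simp
  obtain rfl | hlt := hkj.eq_or_lt
  · simpa only [sub_self] using! zero_mem (antisymmPoly R n)
  obtain ⟨m, rfl⟩ := Nat.exists_eq_add_of_lt hlt
  convert antisymmPoly_mono (by lia : k + m ≤ n)
    (eval_mul_mem_antisymmPoly (totalDegree_X_pow_le 1 k) (pow_sub_pow_mem_antisymmPoly m)) using 1
  ext z
  simp only [map_pow, eval_X, Matrix.cons_val_one, Matrix.cons_val_fin_one]
  ring

lemma eval_mul_eval_sub_swap_mem_antisymmPoly {n : ℕ} {A B : Polynomial R}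
    (hA : A.natDegree ≤ n + 1) (hB : B.natDegree ≤ n + 1) :
    (fun z : R × R ↦ A.eval z.1 * B.eval z.2 - B.eval z.1 * A.eval z.2) ∈ antisymmPoly R n := by
  have hsum : (fun z : R × R ↦ A.eval z.1 * B.eval z.2 - B.eval z.1 * A.eval z.2) =
      ∑ j ∈ Finset.range (n + 2), ∑ k ∈ Finset.range (n + 2), (A.coeff j * B.coeff k) •
        fun z ↦ z.1 ^ j * z.2 ^ k - z.1 ^ k * z.2 ^ j := by
    ext z
    simp only [Polynomial.eval_eq_sum_range' (Nat.lt_succ_of_le hA),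
      Polynomial.eval_eq_sum_range' (Nat.lt_succ_of_le hB), Finset.sum_apply, Pi.smul_apply,
      smul_eq_mul]
    rw [mul_comm (∑ k ∈ Finset.range (n + 2), B.coeff k * z.1 ^ k)]
    simp only [Finset.sum_mul_sum, ← Finset.sum_sub_distrib]
    exact Finset.sum_congr rfl fun j _ ↦ Finset.sum_congr rfl fun k _ ↦ by ring
  rw [hsum]
  refine sum_mem fun j hj ↦ sum_mem fun k hk ↦ Submodule.smul_mem _ _ ?_
  exact monomial_sub_swap_mem_antisymmPoly (Finset.mem_range_succ_iff.1 hj)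
    (Finset.mem_range_succ_iff.1 hk)

lemma exists_natDegree_le_eval_eq_vandermondeLift {n : ℕ} {P : MvPolynomial (Fin 2) R}
    (hP : P.totalDegree ≤ n) (t : R) :
    ∃ Q : Polynomial R, Q.natDegree ≤ n + 1 ∧ ∀ s, Q.eval s = vandermondeLift P (s, t) := by
  let f : Fin 2 → Polynomial R :=
    ![Polynomial.X + Polynomial.C t, Polynomial.X * Polynomial.C t]
  have hf (i : Fin 2) : (f i).natDegree ≤ 1 := by
    fin_cases i
    · exact Polynomial.natDegree_add_C.trans_le Polynomial.natDegree_X_le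
    · exact (Polynomial.natDegree_mul_C_le _ _).trans Polynomial.natDegree_X_le
  refine ⟨(Polynomial.X - Polynomial.C t) * aeval f P, ?_, fun s ↦ ?_⟩
  · calc ((Polynomial.X - Polynomial.C t) * aeval f P).natDegree
        ≤ (Polynomial.X - Polynomial.C t).natDegree + (aeval f P).natDegree :=
          Polynomial.natDegree_mul_le
      _ ≤ 1 + n * 1 :=
          add_le_add (Polynomial.natDegree_X_sub_C_le t) (aeval_natDegree_le P hP f hf)
      _ = n + 1 := by ring
  · have heval : (aeval f P).eval s = eval ![s + t, s * t] P := by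
      rw [← Polynomial.coe_evalRingHom, aeval_def, hom_eval₂, eval]
      congr 1
      · ext; simp
      · ext i; fin_cases i <;> simp [f, mul_comm t s]
    rw [vandermondeLift_apply, Polynomial.eval_mul, heval]
    simp

end AntisymmetricPolynomials

section ChristoffelDarboux

lemma CDK_comm (p : ℕ → Polynomial ℝ) (n : ℕ) (x y : ℝ) : CDK p n x y = CDK p n y x :=
  Finset.sum_congr rfl fun _ _ ↦ mul_comm _ _

/-- The Christoffel–Darboux kernel `k_n(a, ·)` as a polynomial in its second variable. -/
def cdPoly (p : ℕ → Polynomial ℝ) (n : ℕ) (a : ℝ) : Polynomial ℝ :=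
  ∑ j ∈ Finset.range (n + 1), Polynomial.C ((p j).eval a) * p j

@[simp]
lemma eval_cdPoly (p : ℕ → Polynomial ℝ) (n : ℕ) (a s : ℝ) :
    (cdPoly p n a).eval s = CDK p n a s := by
  simp [cdPoly, CDK, Polynomial.eval_finsetSum]

lemma continuous_CDK (p : ℕ → Polynomial ℝ) (n : ℕ) (a : ℝ) : Continuous (CDK p n a) := by
  simpa only [eval_cdPoly] using (cdPoly p n a).continuous

variable {w : ℝ → ℝ} {p : ℕ → Polynomial ℝ}

lemma IsONPS.natDegree_cdPoly_le (hp : IsONPS w p) (n : ℕ) (a : ℝ) :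
    (cdPoly p n a).natDegree ≤ n :=
  Polynomial.natDegree_sum_le_of_forall_le _ _ fun j hj ↦
    (Polynomial.natDegree_C_mul_le _ _).trans ((hp.1 j).trans_le (Finset.mem_range_succ_iff.1 hj))

lemma IsONPS.mem_span_image_Iic (hp : IsONPS w p) {n : ℕ} {Q : Polynomial ℝ}
    (hQ : Q.natDegree ≤ n) : Q ∈ Submodule.span ℝ (p '' Iic n) := by
  have hlead (i : ℕ) : (p i).leadingCoeff ≠ 0 := (hp.2.1 i).ne'
  let S : Polynomial.Sequence ℝ := ⟨p, fun i ↦ by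
    rw [Polynomial.degree_eq_natDegree (Polynomial.leadingCoeff_ne_zero.1 (hlead i)), hp.1 i]⟩
  have hspan : Submodule.span ℝ (p '' Iic n) = Polynomial.degreeLE ℝ n :=
    S.span_degreeLE fun i _ ↦ (hlead i).isUnit
  rw [hspan, Polynomial.mem_degreeLE]
  exact Polynomial.degree_le_of_natDegree_le hQ

lemma IsONPS.integral_self_mul_CDK (hp : IsONPS w p) (hw : IntegrableOn w (Icc (-1) 1))
    {n i : ℕ} (hi : i ≤ n) (a : ℝ) :
    ∫ s in Icc (-1 : ℝ) 1, (p i).eval s * CDK p n a s * w s = (p i).eval a := by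
  have hexpand (s : ℝ) : (p i).eval s * CDK p n a s * w s =
      ∑ j ∈ Finset.range (n + 1), (p j).eval a * ((p i).eval s * (p j).eval s * w s) := by
    rw [CDK, Finset.mul_sum, Finset.sum_mul]
    exact Finset.sum_congr rfl fun j _ ↦ by ring
  have hint (j : ℕ) : IntegrableOn (fun s ↦ (p i).eval s * (p j).eval s * w s) (Icc (-1) 1) :=
    hw.continuousOn_mul ((p i).continuous.mul (p j).continuous).continuousOn isCompact_Icc
  simp_rw [hexpand]
  rw [integral_finsetSum _ fun j _ ↦ (hint j).const_mul _]
  simp_rw [integral_const_mul, hp.2.2]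
  simp [Nat.lt_succ_of_le hi]

lemma IsONPS.integral_eval_mul_CDK (hp : IsONPS w p) (hw : IntegrableOn w (Icc (-1) 1))
    {n : ℕ} {Q : Polynomial ℝ} (hQ : Q.natDegree ≤ n) (a : ℝ) :
    ∫ s in Icc (-1 : ℝ) 1, Q.eval s * CDK p n a s * w s = Q.eval a := by
  have hint (Q : Polynomial ℝ) :
      IntegrableOn (fun s ↦ Q.eval s * CDK p n a s * w s) (Icc (-1) 1) :=
    hw.continuousOn_mul (Q.continuous.mul (continuous_CDK p n a)).continuousOn isCompact_Icc
  have hspan := hp.mem_span_image_Iic hQ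
  clear hQ
  induction hspan using Submodule.span_induction with
  | mem Q hmem =>
    obtain ⟨i, hi, rfl⟩ := hmem
    exact hp.integral_self_mul_CDK hw hi a
  | zero => simp
  | add Q₁ Q₂ _ _ h₁ h₂ =>
    simp only [Polynomial.eval_add, add_mul]
    rw [integral_add (hint Q₁) (hint Q₂), h₁, h₂]
  | smul c Q _ h =>
    simp only [Polynomial.eval_smul, smul_eq_mul, mul_assoc] at h ⊢
    rw [integral_const_mul, h]

end ChristoffelDarboux

section SquareIntegrals

lemma integrableOn_mul_prod_self {w : ℝ → ℝ} {S : Set ℝ} (hw : IntegrableOn w S)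
    (hS : IsCompact S) {f : ℝ × ℝ → ℝ} (hf : Continuous f) :
    IntegrableOn (fun z ↦ f z * (w z.1 * w z.2)) (S ×ˢ S) := by
  refine IntegrableOn.continuousOn_mul hf.continuousOn ?_ (hS.prod hS)
  rw [Measure.volume_eq_prod, IntegrableOn, ← Measure.prod_restrict]
  exact Integrable.mul_prod hw hw

lemma setIntegral_prod_self_of_symm {α E : Type*} [LinearOrder α] [TopologicalSpace α]
    [OrderClosedTopology α] [SecondCountableTopology α] [MeasurableSpace α] [OpensMeasurableSpace α]
    [NormedAddCommGroup E] [NormedSpace ℝ E] {μ : Measure α} [SFinite μ] {S : Set α}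
    (hS : MeasurableSet S) {g : α × α → E} (hg : IntegrableOn g (S ×ˢ S) (μ.prod μ))
    (hsymm : ∀ z, g z.swap = g z) (hdiag : ∀ a, g (a, a) = 0) :
    ∫ z in S ×ˢ S, g z ∂μ.prod μ = 2 • ∫ z in S ×ˢ S ∩ {z | z.1 < z.2}, g z ∂μ.prod μ := by
  have hlt : MeasurableSet {z : α × α | z.1 < z.2} :=
    measurableSet_lt measurable_fst measurable_snd
  have hgt : ∫ z in S ×ˢ S \ {z | z.1 < z.2}, g z ∂μ.prod μ =
      ∫ z in S ×ˢ S ∩ {z | z.2 < z.1}, g z ∂μ.prod μ := by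
    refine setIntegral_eq_of_subset_of_forall_sdiff_eq_zero ((hS.prod hS).diff hlt)
      (fun z hz ↦ ⟨hz.1, hz.2.not_gt⟩) ?_
    rintro ⟨a, b⟩ ⟨⟨hmem, hba⟩, hab⟩
    obtain rfl : a = b := le_antisymm (not_lt.1 fun h ↦ hab ⟨hmem, h⟩) (not_lt.1 hba)
    exact hdiag a
  have hswap : ∫ z in S ×ˢ S ∩ {z | z.2 < z.1}, g z ∂μ.prod μ =
      ∫ z in S ×ˢ S ∩ {z | z.1 < z.2}, g z ∂μ.prod μ := by
    rw [← Measure.measurePreserving_swap.setIntegral_preimage_emb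
      MeasurableEquiv.prodComm.measurableEmbedding]
    simp only [hsymm, preimage_inter, preimage_swap_prod]
    rfl
  rw [← integral_inter_add_sdiff hlt hg, hgt, hswap, two_nsmul]

lemma setIntegral_sqDom_eq_two_mul_triDom {g : ℝ × ℝ → ℝ} (hg : IntegrableOn g sqDom)
    (hsymm : ∀ z, g z.swap = g z) (hdiag : ∀ a, g (a, a) = 0) :
    ∫ z in sqDom, g z = 2 * ∫ z in triDom, g z := by
  have hae : (Ioo (-1 : ℝ) 1 ×ˢ Ioo (-1 : ℝ) 1 : Set (ℝ × ℝ)) =ᵐ[volume] sqDom :=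
    Measure.set_prod_ae_eq Ioo_ae_eq_Icc Ioo_ae_eq_Icc
  have htri : triDom = Ioo (-1 : ℝ) 1 ×ˢ Ioo (-1 : ℝ) 1 ∩ {z | z.1 < z.2} := by
    ext z
    simp only [triDom, mem_ofPred_eq, mem_inter_iff, mem_prod, mem_Ioo]
    exact ⟨fun ⟨h₁, h₁₂, h₂⟩ ↦ ⟨⟨⟨h₁, h₁₂.trans h₂⟩, h₁.trans h₁₂, h₂⟩, h₁₂⟩,
      fun ⟨⟨⟨h₁, _⟩, _, h₂⟩, h₁₂⟩ ↦ ⟨h₁, h₁₂, h₂⟩⟩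
  rw [← setIntegral_congr_set hae, htri, Measure.volume_eq_prod,
    setIntegral_prod_self_of_symm measurableSet_Ioo (hg.congr_set_ae hae) hsymm hdiag,
    nsmul_eq_mul, Nat.cast_ofNat]

variable {w : ℝ → ℝ} {p : ℕ → Polynomial ℝ}

lemma IsONPS.integral_mul_CDK_mul_CDK (hp : IsONPS w p) (hw : IntegrableOn w (Icc (-1) 1))
    {N : ℕ} {F : ℝ × ℝ → ℝ} (hF : Continuous F)
    (hfst : ∀ t, ∃ Q : Polynomial ℝ, Q.natDegree ≤ N ∧ ∀ s, Q.eval s = F (s, t))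
    (hsnd : ∀ s, ∃ Q : Polynomial ℝ, Q.natDegree ≤ N ∧ ∀ t, Q.eval t = F (s, t)) (a b : ℝ) :
    ∫ z in sqDom, F z * (CDK p N a z.1 * CDK p N b z.2) * (w z.1 * w z.2) = F (a, b) := by
  have hint : IntegrableOn (fun z ↦ F z * (CDK p N a z.1 * CDK p N b z.2) * (w z.1 * w z.2))
      sqDom :=
    integrableOn_mul_prod_self hw isCompact_Icc <| hF.mul <|
      ((continuous_CDK p N a).comp continuous_fst).mul ((continuous_CDK p N b).comp continuous_snd)
  have hinner (s : ℝ) :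
      ∫ t in Icc (-1 : ℝ) 1, F (s, t) * (CDK p N a s * CDK p N b t) * (w s * w t) =
        F (s, b) * CDK p N a s * w s := by
    obtain ⟨Q, hQ, hQF⟩ := hsnd s
    calc ∫ t in Icc (-1 : ℝ) 1, F (s, t) * (CDK p N a s * CDK p N b t) * (w s * w t)
        = ∫ t in Icc (-1 : ℝ) 1, CDK p N a s * w s * (Q.eval t * CDK p N b t * w t) := by
          simp only [hQF]
          congr 1 with t
          ring
      _ = F (s, b) * CDK p N a s * w s := by
          rw [integral_const_mul, hp.integral_eval_mul_CDK hw hQ, hQF]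
          ring
  obtain ⟨Q, hQ, hQF⟩ := hfst b
  rw [Measure.volume_eq_prod, sqDom, setIntegral_prod _ hint]
  simp only [hinner, ← hQF]
  exact hp.integral_eval_mul_CDK hw hQ a

lemma continuous_vandermondeLift (P : MvPolynomial (Fin 2) ℝ) : Continuous (vandermondeLift P) := by
  refine (continuous_fst.sub continuous_snd).mul (P.continuous_eval.comp ?_)
  refine continuous_pi fun i ↦ ?_
  fin_cases i
  · exact continuous_fst.add continuous_snd
  · exact continuous_fst.mul continuous_snd

lemma IsONPS.integral_vandermondeLift_mul_CDK (hp : IsONPS w p)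
    (hw : IntegrableOn w (Icc (-1) 1)) {n : ℕ} {P : MvPolynomial (Fin 2) ℝ}
    (hP : P.totalDegree ≤ n) (a b : ℝ) :
    ∫ z in sqDom, vandermondeLift P z * (CDK p (n + 1) a z.1 * CDK p (n + 1) b z.2) *
      (w z.1 * w z.2) = vandermondeLift P (a, b) := by
  refine hp.integral_mul_CDK_mul_CDK hw (continuous_vandermondeLift P)
    (exists_natDegree_le_eval_eq_vandermondeLift hP) (fun s ↦ ?_) a b
  obtain ⟨Q, hQ, hQP⟩ := exists_natDegree_le_eval_eq_vandermondeLift hP s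
  refine ⟨-Q, by rwa [Polynomial.natDegree_neg], fun t ↦ ?_⟩
  rw [Polynomial.eval_neg, hQP, ← vandermondeLift_swap, Prod.swap_prod_mk]

end SquareIntegrals

section ChangeOfVariables

/-- The symmetric substitution `(x, y) ↦ (x + y, x y)`, which maps `triDom` onto `omegaDom`. -/
def sumProd (z : ℝ × ℝ) : ℝ × ℝ := (z.1 + z.2, z.1 * z.2)

lemma continuous_sumProd : Continuous sumProd :=
  (continuous_fst.add continuous_snd).prodMk (continuous_fst.mul continuous_snd)

lemma image_sumProd_triDom : sumProd '' triDom = omegaDom := by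
  ext q
  constructor
  · rintro ⟨z, ⟨h₁, h₁₂, h₂⟩, rfl⟩
    exact ⟨z.1, z.2, h₁, h₁₂, h₂, rfl⟩
  · rintro ⟨x, y, hx, hxy, hy, rfl⟩
    exact ⟨(x, y), ⟨hx, hxy, hy⟩, rfl⟩

lemma discrim_sumProd (z : ℝ × ℝ) : (sumProd z).1 ^ 2 - 4 * (sumProd z).2 = (z.2 - z.1) ^ 2 := by
  simp only [sumProd]
  ring

lemma xRoot_sumProd {z : ℝ × ℝ} (hz : z.1 ≤ z.2) : xRoot (sumProd z) = z.1 := by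
  rw [xRoot, discrim_sumProd, Real.sqrt_sq (sub_nonneg.2 hz), sumProd]
  ring

lemma yRoot_sumProd {z : ℝ × ℝ} (hz : z.1 ≤ z.2) : yRoot (sumProd z) = z.2 := by
  rw [yRoot, discrim_sumProd, Real.sqrt_sq (sub_nonneg.2 hz), sumProd]
  ring

lemma injOn_sumProd : InjOn sumProd {z | z.1 ≤ z.2} := fun z hz z' hz' h ↦
  Prod.ext (by rw [← xRoot_sumProd hz, h, xRoot_sumProd hz'])
    (by rw [← yRoot_sumProd hz, h, yRoot_sumProd hz'])

lemma measurableSet_triDom : MeasurableSet triDom :=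
  (measurableSet_lt measurable_const measurable_fst).inter
    ((measurableSet_lt measurable_fst measurable_snd).inter
      (measurableSet_lt measurable_snd measurable_const))

/-- The derivative of `sumProd`. -/
def sumProdDeriv (z : ℝ × ℝ) : ℝ × ℝ →L[ℝ] ℝ × ℝ :=
  (Matrix.toLin (.finTwoProd ℝ) (.finTwoProd ℝ) !![1, 1; z.2, z.1]).toContinuousLinearMap

lemma hasFDerivAt_sumProd (z : ℝ × ℝ) : HasFDerivAt sumProd (sumProdDeriv z) z := by
  have hfst : HasFDerivAt Prod.fst (ContinuousLinearMap.fst ℝ ℝ ℝ) z := hasFDerivAt_fst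
  have hsnd : HasFDerivAt Prod.snd (ContinuousLinearMap.snd ℝ ℝ ℝ) z := hasFDerivAt_snd
  rw [sumProdDeriv, Matrix.toLin_finTwoProd_toContinuousLinearMap]
  refine ((hfst.add hsnd).prodMk (hfst.mul hsnd)).congr_fderiv ?_
  ext <;> simp

lemma det_sumProdDeriv (z : ℝ × ℝ) : (sumProdDeriv z).det = z.1 - z.2 := by
  simp only [sumProdDeriv, LinearMap.det_toContinuousLinearMap, LinearMap.det_toLin,
    Matrix.det_fin_two_of]
  ring

lemma setIntegral_omegaDom {E : Type*} [NormedAddCommGroup E] [NormedSpace ℝ E] (g : ℝ × ℝ → E) :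
    ∫ q in omegaDom, g q = ∫ z in triDom, |z.1 - z.2| • g (sumProd z) := by
  rw [← image_sumProd_triDom, integral_image_eq_integral_abs_det_fderiv_smul volume
    measurableSet_triDom (fun z _ ↦ (hasFDerivAt_sumProd z).hasFDerivWithinAt)
    (injOn_sumProd.mono fun _ hz ↦ hz.2.1.le)]
  simp only [det_sumProdDeriv]

/-- The weight `W̃_{1/2}(u, v) = 2 w(x) w(y) (u² - 4v)^{1/2}` on `omegaDom`, where `x ≤ y` are the
roots of `t² - u t + v = 0`. -/
def halfWeight (w : ℝ → ℝ) (q : ℝ × ℝ) : ℝ :=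
  2 * w (xRoot q) * w (yRoot q) * (q.1 ^ 2 - 4 * q.2) ^ ((1 : ℝ) / 2)

variable {w : ℝ → ℝ}

lemma halfWeight_sumProd (w : ℝ → ℝ) {z : ℝ × ℝ} (hz : z.1 ≤ z.2) :
    halfWeight w (sumProd z) = 2 * |z.1 - z.2| * (w z.1 * w z.2) := by
  rw [halfWeight, xRoot_sumProd hz, yRoot_sumProd hz, discrim_sumProd, ← Real.sqrt_eq_rpow,
    Real.sqrt_sq_eq_abs, abs_sub_comm]
  ring

lemma integral_mul_halfWeight (hw : IntegrableOn w (Icc (-1) 1)) {f : ℝ × ℝ → ℝ}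
    (hf : Continuous f) :
    ∫ q in omegaDom, f q * halfWeight w q =
      ∫ z in sqDom, f (sumProd z) * (z.1 - z.2) ^ 2 * (w z.1 * w z.2) := by
  have hint : IntegrableOn (fun z ↦ f (sumProd z) * (z.1 - z.2) ^ 2 * (w z.1 * w z.2)) sqDom :=
    integrableOn_mul_prod_self hw isCompact_Icc <|
      (hf.comp continuous_sumProd).mul ((continuous_fst.sub continuous_snd).pow 2)
  have hsymm (z : ℝ × ℝ) : f (sumProd z.swap) * (z.swap.1 - z.swap.2) ^ 2 *
      (w z.swap.1 * w z.swap.2) = f (sumProd z) * (z.1 - z.2) ^ 2 * (w z.1 * w z.2) := by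
    have hswap : sumProd z.swap = sumProd z := Prod.ext (add_comm _ _) (mul_comm _ _)
    rw [hswap, Prod.fst_swap, Prod.snd_swap]
    ring
  rw [setIntegral_omegaDom, setIntegral_sqDom_eq_two_mul_triDom hint hsymm (by simp),
    ← integral_const_mul]
  refine setIntegral_congr_fun measurableSet_triDom fun z hz ↦ ?_
  simp only [halfWeight_sumProd w hz.2.1.le, smul_eq_mul, ← sq_abs (z.1 - z.2)]
  ring

lemma continuous_evalP (P : MvPolynomial (Fin 2) ℝ) : Continuous (evalP P) := by
  refine P.continuous_eval.comp (continuous_pi fun i ↦ ?_)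
  fin_cases i
  · exact continuous_fst
  · exact continuous_snd

lemma vandermondeLift_eq_mul_evalP (P : MvPolynomial (Fin 2) ℝ) (z : ℝ × ℝ) :
    vandermondeLift P z = (z.1 - z.2) * evalP P (sumProd z) :=
  rfl

lemma integral_evalP_mul_evalP_mul_halfWeight (hw : IntegrableOn w (Icc (-1) 1))
    (P Q : MvPolynomial (Fin 2) ℝ) :
    ∫ q in omegaDom, evalP P q * evalP Q q * halfWeight w q =
      ∫ z in sqDom, vandermondeLift P z * vandermondeLift Q z * (w z.1 * w z.2) := by
  rw [integral_mul_halfWeight (f := fun q ↦ evalP P q * evalP Q q) hw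
    ((continuous_evalP P).mul (continuous_evalP Q))]
  congr 1 with z
  rw [vandermondeLift_eq_mul_evalP, vandermondeLift_eq_mul_evalP]
  ring

end ChangeOfVariables

section ReproducingKernel

variable {w : ℝ → ℝ} {p : ℕ → Polynomial ℝ}

/-- The antisymmetrization of `k_n ⊗ k_n`, that is, the determinant of the matrix
`k_n(x_i, y_j)`. -/
def detCDK (p : ℕ → Polynomial ℝ) (n : ℕ) (x y : ℝ × ℝ) : ℝ :=
  CDK p n x.1 y.1 * CDK p n x.2 y.2 - CDK p n x.2 y.1 * CDK p n x.1 y.2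

lemma IsONPS.exists_vandermondeLift_eq_detCDK (hp : IsONPS w p) (n : ℕ) (y : ℝ × ℝ) :
    ∃ H : MvPolynomial (Fin 2) ℝ, H.totalDegree ≤ n ∧
      ∀ x, vandermondeLift H x = detCDK p (n + 1) x y := by
  obtain ⟨H, hHdeg, hH⟩ := mem_antisymmPoly.1 <| eval_mul_eval_sub_swap_mem_antisymmPoly
    (hp.natDegree_cdPoly_le (n + 1) y.1) (hp.natDegree_cdPoly_le (n + 1) y.2)
  refine ⟨H, hHdeg, fun x ↦ ?_⟩
  simp only [hH, eval_cdPoly, detCDK, CDK_comm p _ y.1, CDK_comm p _ y.2]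
  ring

lemma IsONPS.integral_vandermondeLift_mul_detCDK (hp : IsONPS w p)
    (hw : IntegrableOn w (Icc (-1) 1)) {n : ℕ} {P : MvPolynomial (Fin 2) ℝ}
    (hP : P.totalDegree ≤ n) (y : ℝ × ℝ) :
    ∫ x in sqDom, vandermondeLift P x * detCDK p (n + 1) x y * (w x.1 * w x.2) =
      2 * vandermondeLift P y := by
  have hint (a b : ℝ) : IntegrableOn (fun x ↦ vandermondeLift P x *
      (CDK p (n + 1) a x.1 * CDK p (n + 1) b x.2) * (w x.1 * w x.2)) sqDom :=
    integrableOn_mul_prod_self hw isCompact_Icc <| (continuous_vandermondeLift P).mul <|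
      ((continuous_CDK p _ a).comp continuous_fst).mul ((continuous_CDK p _ b).comp continuous_snd)
  calc ∫ x in sqDom, vandermondeLift P x * detCDK p (n + 1) x y * (w x.1 * w x.2)
      = (∫ x in sqDom, vandermondeLift P x * (CDK p (n + 1) y.1 x.1 * CDK p (n + 1) y.2 x.2) *
            (w x.1 * w x.2)) -
          ∫ x in sqDom, vandermondeLift P x * (CDK p (n + 1) y.2 x.1 * CDK p (n + 1) y.1 x.2) *
            (w x.1 * w x.2) := by
        rw [← integral_sub (hint _ _) (hint _ _)]
        congr 1 with x
        simp only [detCDK, CDK_comm p _ y.1, CDK_comm p _ y.2]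
        ring
    _ = vandermondeLift P y - vandermondeLift P y.swap := by
        rw [hp.integral_vandermondeLift_mul_CDK hw hP, hp.integral_vandermondeLift_mul_CDK hw hP]
        rfl
    _ = 2 * vandermondeLift P y := by
        rw [vandermondeLift_swap]
        ring

lemma evalP_sumProd_eq_of_eqOn_omegaDom {P Q : MvPolynomial (Fin 2) ℝ}
    (h : EqOn (evalP P) (evalP Q) omegaDom) (z : ℝ × ℝ) :
    evalP P (sumProd z) = evalP Q (sumProd z) := by
  let φ : MvPolynomial (Fin 2) ℝ →ₐ[ℝ] MvPolynomial (Fin 2) ℝ := MvPolynomial.bind₁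
    ![MvPolynomial.X 0 + MvPolynomial.X 1, MvPolynomial.X 0 * MvPolynomial.X 1]
  have hφ (P : MvPolynomial (Fin 2) ℝ) (v : Fin 2 → ℝ) :
      MvPolynomial.eval v (φ P) = evalP P (sumProd (v 0, v 1)) := by
    simp only [φ, evalP, sumProd, MvPolynomial.eval, MvPolynomial.eval₂Hom_bind₁]
    congr 2
    ext i
    fin_cases i <;> simp
  have hPQ : φ P = φ Q := by
    -- the box `(-1, 0) × (0, 1)` lies in the triangle `triDom`
    refine MvPolynomial.funext_set ![Ioo (-1) 0, Ioo 0 1] (fun i ↦ ?_) fun v hv ↦ ?_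
    · fin_cases i
      · exact Ioo_infinite (by norm_num : (-1 : ℝ) < 0)
      · exact Ioo_infinite (zero_lt_one' ℝ)
    · have h₀ : v 0 ∈ Ioo (-1 : ℝ) 0 := hv 0 trivial
      have h₁ : v 1 ∈ Ioo (0 : ℝ) 1 := hv 1 trivial
      rw [hφ, hφ]
      exact h ⟨v 0, v 1, h₀.1, h₀.2.trans h₁.1, h₁.2, rfl⟩
  simpa [hφ] using congrArg (MvPolynomial.eval ![z.1, z.2]) hPQ

lemma IsRK.exists_evalP_eq {D : Set (ℝ × ℝ)} {W : ℝ × ℝ → ℝ} {n : ℕ} {K : ℝ × ℝ → ℝ × ℝ → ℝ}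
    (hK : IsRK D W n K) (y : ℝ × ℝ) : ∃ P, ∀ x, evalP P x = K x y := by
  obtain ⟨⟨KP, hKP⟩, -⟩ := hK
  refine ⟨MvPolynomial.bind₁ ![MvPolynomial.X 0, MvPolynomial.X 1, MvPolynomial.C y.1,
    MvPolynomial.C y.2] KP, fun x ↦ ?_⟩
  simp only [hKP, evalP, MvPolynomial.eval, MvPolynomial.eval₂Hom_bind₁]
  congr 2
  ext i
  fin_cases i <;> simp

lemma IsRK.two_mul_sub_mul_sub_mul_eq_detCDK {n : ℕ} {K : ℝ × ℝ → ℝ × ℝ → ℝ}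
    (hK : IsRK omegaDom (halfWeight w) n K) (hp : IsONPS w p) (hw : IntegrableOn w (Icc (-1) 1))
    (x y : ℝ × ℝ) :
    2 * ((x.1 - x.2) * (y.1 - y.2) * K (sumProd x) (sumProd y)) = detCDK p (n + 1) x y := by
  obtain ⟨H, hHdeg, hH⟩ := hp.exists_vandermondeLift_eq_detCDK n y
  obtain ⟨Q, hQ⟩ := hK.exists_evalP_eq (sumProd y)
  have hHQ : EqOn (evalP H) (evalP ((2 * (y.1 - y.2)) • Q)) omegaDom := fun q hq ↦ by
    obtain ⟨P, hPdeg, hP⟩ := hK.2.1 q hq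
    calc evalP H q
        = ∫ q' in omegaDom, evalP P q' * evalP H q' * halfWeight w q' := by
          simpa only [hP] using (hK.2.2 H hHdeg q hq).symm
      _ = 2 * ((y.1 - y.2) * evalP P (sumProd y)) := by
          rw [integral_evalP_mul_evalP_mul_halfWeight hw]
          simp only [hH]
          rw [hp.integral_vandermondeLift_mul_detCDK hw hPdeg, vandermondeLift_eq_mul_evalP]
      _ = evalP ((2 * (y.1 - y.2)) • Q) q := by
          rw [evalP, evalP, MvPolynomial.smul_eval, ← evalP, ← evalP, hQ, hP, mul_assoc]
  have hx := evalP_sumProd_eq_of_eqOn_omegaDom hHQ x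
  rw [evalP, evalP, MvPolynomial.smul_eval, ← evalP, ← evalP, hQ] at hx
  rw [← hH, vandermondeLift_eq_mul_evalP, hx]
  ring

end ReproducingKernel

theorem stmt_5_general {w : ℝ → ℝ} (hw : IntegrableOn w (Icc (-1) 1)) {p : ℕ → Polynomial ℝ}
    (hp : IsONPS w p) {n : ℕ} {K : ℝ × ℝ → ℝ × ℝ → ℝ} (hK : IsRK omegaDom (halfWeight w) n K)
    {x₁ x₂ y₁ y₂ : ℝ} (hx : x₁ ≠ x₂) (hy : y₁ ≠ y₂) :
    K (x₁ + x₂, x₁ * x₂) (y₁ + y₂, y₁ * y₂) =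
      (1 / 2) * ((CDK p (n + 1) x₁ y₁ * CDK p (n + 1) x₂ y₂ -
        CDK p (n + 1) x₂ y₁ * CDK p (n + 1) x₁ y₂) / ((x₁ - x₂) * (y₁ - y₂))) := by
  have h := hK.two_mul_sub_mul_sub_mul_eq_detCDK hp hw (x₁, x₂) (y₁, y₂)
  simp only [sumProd, detCDK] at h
  have hx' : x₁ - x₂ ≠ 0 := sub_ne_zero.2 hx
  have hy' : y₁ - y₂ ≠ 0 := sub_ne_zero.2 hy
  rw [← h]
  field_simp


/-- closed formula for the reproducing kernel of `Π_n²` in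
`L²(W̃_{1/2})` in terms of Christoffel–Darboux kernels. -/
theorem stmt_5
    (w : ℝ → ℝ) (hw0 : ∀ x, 0 ≤ w x)
    (hwi : IntegrableOn w (Icc (-1:ℝ) 1))
    (hw1 : (∫ x in Icc (-1:ℝ) 1, w x) = 1)
    (hwm : ∀ k : ℕ, IntegrableOn (fun x => x ^ k * w x) (Icc (-1:ℝ) 1))
    (p : ℕ → Polynomial ℝ) (hp : IsONPS w p)
    (W : ℝ × ℝ → ℝ)
    (hW : ∀ q : ℝ × ℝ, W q
      = 2 * w (xRoot q) * w (yRoot q) * (q.1 ^ 2 - 4 * q.2) ^ ((1:ℝ)/2))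
    (K : ℕ → (ℝ × ℝ) → (ℝ × ℝ) → ℝ)
    (hK : ∀ n, IsRK omegaDom W n (K n)) :
    ∀ n : ℕ, ∀ x₁ x₂ y₁ y₂ : ℝ,
      x₁ ∈ Ioo (-1:ℝ) 1 → x₂ ∈ Ioo (-1:ℝ) 1 → y₁ ∈ Ioo (-1:ℝ) 1 → y₂ ∈ Ioo (-1:ℝ) 1 →
      x₁ ≠ x₂ → y₁ ≠ y₂ →
      K n (x₁ + x₂, x₁ * x₂) (y₁ + y₂, y₁ * y₂)
        = (1/2) * ((CDK p (n+1) x₁ y₁ * CDK p (n+1) x₂ y₂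
              - CDK p (n+1) x₂ y₁ * CDK p (n+1) x₁ y₂)
            / ((x₁ - x₂) * (y₁ - y₂))) := by
  obtain rfl : W = halfWeight w := funext hW
  exact fun n _ _ _ _ _ _ _ _ hx hy ↦ stmt_5_general hwi hp (hK n) hx hy
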